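/- arXiv:2202.00577 — 6 statements merged into one kernel-verified Lean document; each statement's English description precedes it below -/
import Mathlib

section
/- Let p, q, u, v be points in the Euclidean plane ℝ² such that p, q, u are affinely independent and u and v lie strictly on the same side of the line through p and q. If the angle ∠ p u q is strictly smaller than the angle ∠ p v q, then v lies in the open circumdisk of the triangle p q u, i.e. the distance from v to the circumcenter of the triangle with vertices p, q, u is strictly less than its circumradius. (Lemma: Circumdisk of a triangle.) -/
open EuclideanGeometry AffineSubspace

lemma aux_ineq {a b x y n m : ℝ} (hx : 0 < x) (hy : 0 < y) (hn : 0 < n) (hm : 0 < m)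
    (hn2 : n ^ 2 = a ^ 2 + x ^ 2) (hm2 : m ^ 2 = b ^ 2 + y ^ 2) (h : a * m < b * n) :
    a * y < b * x := by
  by_contra! hc
  rcases le_or_gt 0 b with hb | hb
  · have h0 : 0 ≤ b * x := by positivity
    have h1 : (b * x) ^ 2 ≤ (a * y) ^ 2 := pow_le_pow_left₀ h0 hc 2
    have ha : 0 ≤ a := by
      by_contra! ha
      have := mul_neg_of_neg_of_pos ha hy
      linarith
    have h2 : (b * n) ^ 2 ≤ (a * m) ^ 2 := by
      rw [mul_pow, mul_pow, hn2, hm2]; nlinarith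
    have := abs_le_of_sq_le_sq h2 (by positivity)
    linarith [le_abs_self (b * n), neg_le_abs (-(a * m)), le_abs_self (-(a * m))]
  · rcases le_or_gt 0 a with ha | ha
    · have := mul_neg_of_neg_of_pos hb hn
      have : 0 ≤ a * m := by positivity
      linarith
    · have h0 : 0 ≤ -(a * y) := by have := mul_neg_of_neg_of_pos ha hy; linarith
      have h1 : (-(a * y)) ^ 2 ≤ (-(b * x)) ^ 2 := pow_le_pow_left₀ h0 (by linarith) 2
      have h2 : (-(a * m)) ^ 2 ≤ (-(b * n)) ^ 2 := by
        rw [neg_sq, neg_sq, mul_pow, mul_pow, hn2, hm2]; nlinarith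
      have := abs_le_of_sq_le_sq h2 (by have := mul_neg_of_neg_of_pos hb hn; linarith)
      linarith [le_abs_self (b * n), neg_le_abs (-(a * m)), le_abs_self (-(a * m))]

/-- cross product of `p - w` and `q - w` -/
def crs (p q w : EuclideanSpace ℝ (Fin 2)) : ℝ :=
  (p 0 - w 0) * (q 1 - w 1) - (p 1 - w 1) * (q 0 - w 0)

/-- dot product of `p - w` and `q - w` -/
def dt (p q w : EuclideanSpace ℝ (Fin 2)) : ℝ :=
  (p 0 - w 0) * (q 0 - w 0) + (p 1 - w 1) * (q 1 - w 1)

lemma nsq (p w : EuclideanSpace ℝ (Fin 2)) :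
    ‖p - w‖ ^ 2 = (p 0 - w 0) ^ 2 + (p 1 - w 1) ^ 2 := by
  rw [EuclideanSpace.real_norm_sq_eq]; simp [Fin.sum_univ_two]

lemma inner_dt (p q w : EuclideanSpace ℝ (Fin 2)) : inner ℝ (p - w) (q - w) = dt p q w := by
  simp [PiLp.inner_apply, Fin.sum_univ_two, dt]; ring

lemma nn_sq (p q w : EuclideanSpace ℝ (Fin 2)) :
    (‖p - w‖ * ‖q - w‖) ^ 2 = dt p q w ^ 2 + |crs p q w| ^ 2 := by
  rw [mul_pow, nsq, nsq, sq_abs, dt, crs]; ring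

lemma nn_pos {p q w : EuclideanSpace ℝ (Fin 2)} (h : crs p q w ≠ 0) :
    0 < ‖p - w‖ * ‖q - w‖ := by
  have h1 := nn_sq p q w
  have h2 : 0 < |crs p q w| := abs_pos.mpr h
  have h3 : 0 ≤ ‖p - w‖ * ‖q - w‖ := by positivity
  rcases h3.lt_or_eq with h | h
  · exact h
  · rw [← h] at h1; nlinarith [sq_nonneg (dt p q w)]

lemma mem_line {p q u : EuclideanSpace ℝ (Fin 2)} (hpq : p ≠ q) (h : crs p q u = 0) :
    u ∈ affineSpan ℝ ({p, q} : Set (EuclideanSpace ℝ (Fin 2))) := by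
  have hn : (q 0 - p 0) ^ 2 + (q 1 - p 1) ^ 2 ≠ 0 := by
    rw [← nsq]
    have : q - p ≠ 0 := sub_ne_zero.mpr hpq.symm
    positivity
  have : u = AffineMap.lineMap p q
      (((u 0 - p 0) * (q 0 - p 0) + (u 1 - p 1) * (q 1 - p 1)) /
        ((q 0 - p 0) ^ 2 + (q 1 - p 1) ^ 2)) := by
    unfold crs at h
    ext i
    fin_cases i
    · simp [AffineMap.lineMap_apply]
      field_simp
      linear_combination -(q 1 - p 1) * h
    · simp [AffineMap.lineMap_apply]
      field_simp
      linear_combination (q 0 - p 0) * h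
  rw [this]
  exact AffineMap.lineMap_mem_affineSpan_pair _ _ _

lemma crs_pos {p q u v : EuclideanSpace ℝ (Fin 2)} (hpq : p ≠ q)
    (hside : (affineSpan ℝ ({p, q} : Set (EuclideanSpace ℝ (Fin 2)))).SSameSide u v) :
    0 < crs p q u * crs p q v := by
  obtain ⟨⟨p1, hp1, p2, hp2, hr⟩, hu, hv⟩ := hside
  have hu0 : crs p q u ≠ 0 := fun h => hu (mem_line hpq h)
  obtain ⟨s, rfl⟩ := mem_affineSpan_pair_iff_exists_lineMap_eq.1 hp1
  obtain ⟨t, rfl⟩ := mem_affineSpan_pair_iff_exists_lineMap_eq.1 hp2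
  rcases hr with h | h | ⟨r1, r2, h1, h2, h⟩
  · rw [vsub_eq_zero_iff_eq] at h; rw [h] at hu; exact absurd hp1 hu
  · rw [vsub_eq_zero_iff_eq] at h; rw [h] at hv; exact absurd hp2 hv
  · have e0 := congrArg (fun z => z 0) h
    have e1 := congrArg (fun z => z 1) h
    simp [AffineMap.lineMap_apply] at e0 e1
    have key : r1 * crs p q u = r2 * crs p q v := by
      unfold crs
      linear_combination (p 1 - q 1) * e0 - (p 0 - q 0) * e1
    have h3 : r2 * (crs p q u * crs p q v) = r1 * crs p q u ^ 2 := by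
      linear_combination -(crs p q u) * key
    have h4 : 0 < r1 * crs p q u ^ 2 := by positivity
    rw [← h3] at h4
    exact (mul_pos_iff_of_pos_left h2).1 h4

/-- Circumdisk of a triangle: if `u` and `v` lie strictly on the same side of the line
through `p` and `q` and `∠ p u q < ∠ p v q`, then `v` lies in the open circumdisk of the
triangle `p q u`. -/
theorem circumdisk_of_triangle (p q u v : EuclideanSpace ℝ (Fin 2))
    (hind : AffineIndependent ℝ ![p, q, u])
    (hside : (affineSpan ℝ ({p, q} : Set (EuclideanSpace ℝ (Fin 2)))).SSameSide u v)
    (hang : ∠ p u q < ∠ p v q) :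
    dist v (Affine.Simplex.circumcenter ⟨![p, q, u], hind⟩) <
      Affine.Simplex.circumradius (⟨![p, q, u], hind⟩ : Affine.Simplex ℝ (EuclideanSpace ℝ (Fin 2)) 2) := by
  have hpq : p ≠ q := by
    have := hind.injective.ne (show (0 : Fin 3) ≠ 1 by decide)
    simpa using this
  have hX := crs_pos hpq hside
  have hu0 : crs p q u ≠ 0 := left_ne_zero_of_mul hX.ne'
  have hv0 : crs p q v ≠ 0 := right_ne_zero_of_mul hX.ne'
  have hD : dt p q v * |crs p q u| < dt p q u * |crs p q v| := by
    refine aux_ineq (abs_pos.2 hv0) (abs_pos.2 hu0) (nn_pos hv0) (nn_pos hu0)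
      (nn_sq p q v) (nn_sq p q u) ?_
    by_contra! hc
    refine absurd hang (not_lt.2 ?_)
    unfold EuclideanGeometry.angle InnerProductGeometry.angle
    apply Real.arccos_le_arccos
    simp only [vsub_eq_sub, inner_dt]
    rw [div_le_div_iff₀ (nn_pos hu0) (nn_pos hv0)]
    exact hc
  set S : Affine.Simplex ℝ (EuclideanSpace ℝ (Fin 2)) 2 := ⟨![p, q, u], hind⟩ with hS
  have hp := S.dist_circumcenter_eq_circumradius 0
  have hq := S.dist_circumcenter_eq_circumradius 1
  have hu := S.dist_circumcenter_eq_circumradius 2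
  have hR := S.circumradius_nonneg
  change dist p _ = _ at hp
  change dist q _ = _ at hq
  change dist u _ = _ at hu
  generalize S.circumcenter = o at *
  generalize S.circumradius = R at *
  have Ep := nsq p o
  have Eq := nsq q o
  have Eu := nsq u o
  have Ev := nsq v o
  rw [← dist_eq_norm, hp] at Ep
  rw [← dist_eq_norm, hq] at Eq
  rw [← dist_eq_norm, hu] at Eu
  rw [← dist_eq_norm] at Ev
  have key : (dist v o ^ 2 - R ^ 2) * crs p q u
      = dt p q v * crs p q u - dt p q u * crs p q v := by
    rw [Ev]

    linear_combination (norm := (simp only [crs, dt]; ring)) (-(crs p q v)) * Eu - crs v q u * Ep - crs p v u * Eq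
  refine lt_of_pow_lt_pow_left₀ 2 hR ?_
  rcases lt_or_gt_of_ne hu0 with h | h
  · have h' : crs p q v < 0 := by
      by_contra! hh
      linarith [mul_nonpos_of_nonpos_of_nonneg h.le hh]
    rw [abs_of_neg h, abs_of_neg h'] at hD
    by_contra! hh
    have := mul_nonpos_of_nonneg_of_nonpos (sub_nonneg.2 hh) h.le
    linarith
  · have h' : 0 < crs p q v := (mul_pos_iff_of_pos_left h).1 hX
    rw [abs_of_pos h, abs_of_pos h'] at hD
    by_contra! hh
    have := mul_nonneg (sub_nonneg.2 hh) h.le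
    linarith
end

section
/- Let p, q, v be points in a real inner product space with p ≠ q, v ≠ p and v ≠ q, and let α = dist(p, q)/2. Then the triple intersection of the closed balls of radius α centered at p, q and v is nonempty if and only if the angle ∠ p v q is non-acute, i.e. ∠ p v q ≥ π/2. (Core of the lemma on long edges in Delaunay complexes.) -/
open EuclideanGeometry

/-- The triple intersection of the closed balls of radius `dist p q / 2` centred at `p`, `q`
and `v` is nonempty if and only if the angle `∠ p v q` is non-acute. -/
theorem triple_ball_inter_nonempty_iff_angle_nonacute
    {V : Type*} [NormedAddCommGroup V] [InnerProductSpace ℝ V] (p q v : V)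
    (hpq : p ≠ q) (hvp : v ≠ p) (hvq : v ≠ q) :
    (Metric.closedBall p (dist p q / 2) ∩ Metric.closedBall q (dist p q / 2) ∩
        Metric.closedBall v (dist p q / 2)).Nonempty ↔ Real.pi / 2 ≤ ∠ p v q := by
  have ha : 0 < ‖p - v‖ := norm_pos_iff.2 (sub_ne_zero.2 hvp.symm)
  have hb : 0 < ‖q - v‖ := norm_pos_iff.2 (sub_ne_zero.2 hvq.symm)
  have hang : Real.pi / 2 ≤ ∠ p v q ↔ inner ℝ (p - v) (q - v) ≤ 0 := by
    have h1 : Real.pi / 2 ≤ ∠ p v q ↔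
        inner ℝ (p - v) (q - v) / (‖p - v‖ * ‖q - v‖) ≤ 0 := by
      simp [EuclideanGeometry.angle, InnerProductGeometry.angle, Real.arccos]
    rw [h1, div_le_iff₀ (mul_pos ha hb), zero_mul]
  have hsum : ‖(p - v) + (q - v)‖ ^ 2 = ‖p - q‖ ^ 2 + 4 * inner ℝ (p - v) (q - v) := by
    have e : p - q = (p - v) - (q - v) := by abel
    rw [e, norm_add_sq_real, norm_sub_sq_real (p - v) (q - v)]
    ring
  have hmid : ‖midpoint ℝ p q - v‖ = ‖(p - v) + (q - v)‖ / 2 := by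
    have e : midpoint ℝ p q - v = (2⁻¹ : ℝ) • ((p - v) + (q - v)) := by
      rw [midpoint_eq_smul_add, invOf_eq_inv]
      module
    rw [e, norm_smul]
    norm_num
    ring
  have key : ‖midpoint ℝ p q - v‖ ≤ dist p q / 2 ↔ Real.pi / 2 ≤ ∠ p v q := by
    rw [hang, hmid, dist_eq_norm, div_le_div_iff_of_pos_right (by norm_num : (0:ℝ) < 2),
      ← sq_le_sq₀ (norm_nonneg _) (norm_nonneg _), hsum]
    constructor <;> intro h <;> linarith
  rw [← key]
  constructor
  · rintro ⟨x, ⟨hxp, hxq⟩, hxv⟩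
    rw [Metric.mem_closedBall, dist_eq_norm, dist_eq_norm] at hxp hxq
    have hpar := parallelogram_law_with_norm ℝ (x - p) (x - q)
    have e : (x - p) - (x - q) = -(p - q) := by abel
    rw [e, norm_neg] at hpar
    have h0 : ‖(x - p) + (x - q)‖ = 0 := by
      have := norm_nonneg (x - p)
      have := norm_nonneg (x - q)
      have : ‖(x - p) + (x - q)‖ * ‖(x - p) + (x - q)‖ ≤ 0 := by nlinarith
      nlinarith
    have h0' := norm_eq_zero.1 h0
    have hx : midpoint ℝ p q = x := by
      rw [midpoint_eq_smul_add, invOf_eq_inv]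
      have : x = (2⁻¹ : ℝ) • (p + q) + (2⁻¹ : ℝ) • ((x - p) + (x - q)) := by module
      rw [h0', smul_zero, add_zero] at this
      exact this.symm
    rw [hx, ← dist_eq_norm]
    exact hxv
  · intro h
    refine ⟨midpoint ℝ p q, ⟨?_, ?_⟩, ?_⟩
    · rw [Metric.mem_closedBall, dist_midpoint_left]
      norm_num
      linarith
    · rw [Metric.mem_closedBall, dist_midpoint_right]
      norm_num
      linarith
    · rw [Metric.mem_closedBall, dist_eq_norm]
      exact h
end

section
/- Let V be a real inner product space, r a nonzero vector in V, and a, b, c points of V such that the angle between the vector b − a and r is strictly less than π/4 and the angle between the vector c − b and r is strictly less than π/4. Then the angle ∠ a b c is strictly greater than π/2. (Angle part of the lemma on tails in ℝ^N: points proceeding along a ray with angular deviation below π/4 make a non-acute angle at every intermediate point.) -/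
open EuclideanGeometry

/-- If the vectors `b - a` and `c - b` both make an angle strictly less than `π/4` with a
nonzero vector `r`, then the angle `∠ a b c` at `b` is strictly obtuse. -/
theorem angle_gt_pi_div_two_of_angular_deviation_lt_pi_div_four
    {V : Type*} [NormedAddCommGroup V] [InnerProductSpace ℝ V]
    (r : V) (hr : r ≠ 0) (a b c : V)
    (hab : InnerProductGeometry.angle (b - a) r < Real.pi / 4)
    (hbc : InnerProductGeometry.angle (c - b) r < Real.pi / 4) :
    Real.pi / 2 < ∠ a b c := by
  have h1 := InnerProductGeometry.angle_le_angle_add_angle (b - a) r (c - b)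
  rw [InnerProductGeometry.angle_comm r (c - b)] at h1
  have h2 : ∠ a b c = Real.pi - InnerProductGeometry.angle (b - a) (c - b) := by
    unfold EuclideanGeometry.angle
    rw [vsub_eq_sub, vsub_eq_sub, ← neg_sub b a, InnerProductGeometry.angle_neg_left]
  rw [h2]
  linarith
end

section
/- Let V be a real inner product space, r a nonzero vector in V, and a, b, c points of V such that the angle between the vector b − a and r is strictly less than π/4 and the angle between the vector c − b and r is strictly less than π/4. Then dist(a, c) > dist(a, b) and dist(a, c) > dist(b, c); in particular [a, c] is a strictly longest edge of the triangle a b c. (Longest-edge part of the lemma on tails in ℝ^N.) -/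
/-- If the vectors `b - a` and `c - b` both make an angle strictly less than `π/4` with a
nonzero vector `r`, then `[a, c]` is a strictly longest edge of the triangle `a b c`. -/
theorem dist_lt_of_angular_deviation_lt_pi_div_four
    {V : Type*} [NormedAddCommGroup V] [InnerProductSpace ℝ V]
    (r : V) (hr : r ≠ 0) (a b c : V)
    (hab : InnerProductGeometry.angle (b - a) r < Real.pi / 4)
    (hbc : InnerProductGeometry.angle (c - b) r < Real.pi / 4) :
    dist a b < dist a c ∧ dist b c < dist a c := by
  rw [dist_comm a b, dist_comm a c, dist_comm b c, dist_eq_norm, dist_eq_norm, dist_eq_norm]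
  have hs : c - a = (b - a) + (c - b) := by abel
  rw [hs]
  generalize b - a = x at *
  generalize c - b = y at *
  have hpi := Real.pi_pos
  have hx : x ≠ 0 := by
    rintro rfl
    rw [InnerProductGeometry.angle_zero_left] at hab
    linarith
  have hy : y ≠ 0 := by
    rintro rfl
    rw [InnerProductGeometry.angle_zero_left] at hbc
    linarith
  have hang : InnerProductGeometry.angle x y < Real.pi / 2 := by
    have h := InnerProductGeometry.angle_le_angle_add_angle x r y
    rw [InnerProductGeometry.angle_comm r y] at h
    linarith
  have hcos : 0 < Real.cos (InnerProductGeometry.angle x y) :=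
    Real.cos_pos_of_mem_Ioo ⟨by linarith [InnerProductGeometry.angle_nonneg x y], hang⟩
  have hxn := norm_pos_iff.mpr hx
  have hyn := norm_pos_iff.mpr hy
  have hin : 0 < inner ℝ x y := by
    rw [← InnerProductGeometry.cos_angle_mul_norm_mul_norm]
    positivity
  have hsq := norm_add_sq_real x y
  constructor
  · apply lt_of_pow_lt_pow_left₀ 2 (norm_nonneg _)
    nlinarith [sq_nonneg ‖y‖]
  · apply lt_of_pow_lt_pow_left₀ 2 (norm_nonneg _)
    nlinarith [sq_nonneg ‖x‖]
end

section
/- Let V be a real inner product space, r a nonzero vector in V, and p : Fin n → V a finite sequence of points such that for all indices i < j the angle between the vector p(j) − p(i) and r is strictly less than π/4. Then for any index i with i + 1 < n and any indices j ≤ i and k ≥ i + 1 with (j, k) ≠ (i, i + 1), one has dist(p(j), p(k)) > dist(p(i), p(i+1)). (Core of the claim that every edge between successive points of a tail is short: any other edge joining the two parts of the sequence separated between positions i and i+1 is strictly longer.) -/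
/-- Vectors within `π/4` of a common direction have positive inner product. -/
lemma inner_pos_of_cone {V : Type*} [NormedAddCommGroup V] [InnerProductSpace ℝ V]
    {r u v : V} (hu : InnerProductGeometry.angle u r < Real.pi / 4)
    (hv : InnerProductGeometry.angle v r < Real.pi / 4) : 0 < inner ℝ u v := by
  have hpi := Real.pi_pos
  have h0 : ∀ w : V, InnerProductGeometry.angle w r < Real.pi / 4 → 0 < ‖w‖ := by
    intro w hw
    rw [norm_pos_iff]
    rintro rfl
    rw [InnerProductGeometry.angle_zero_left] at hw
    linarith
  have h1 := InnerProductGeometry.angle_le_angle_add_angle u r v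
  rw [InnerProductGeometry.angle_comm r v] at h1
  rw [← InnerProductGeometry.cos_angle_mul_norm_mul_norm]
  have h2 : 0 < Real.cos (InnerProductGeometry.angle u v) :=
    Real.cos_pos_of_mem_Ioo
      ⟨by linarith [InnerProductGeometry.angle_nonneg u v], by linarith⟩
  exact mul_pos h2 (mul_pos (h0 u hu) (h0 v hv))

/-- Adding a cone vector strictly increases the norm. -/
lemma norm_lt_norm_add_of_cone {V : Type*} [NormedAddCommGroup V] [InnerProductSpace ℝ V]
    {r u v : V} (hu : InnerProductGeometry.angle u r < Real.pi / 4)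
    (hv : InnerProductGeometry.angle v r < Real.pi / 4) : ‖u‖ < ‖u + v‖ := by
  have h := inner_pos_of_cone hu hv
  have h1 := norm_add_sq_real u v
  refine lt_of_pow_lt_pow_left₀ 2 (norm_nonneg _) ?_
  nlinarith [sq_nonneg ‖v‖]

/-- In a sequence of points whose pairwise connecting vectors (in increasing index order)
make an angle strictly less than `π/4` with a fixed nonzero vector `r`, any edge joining a
point of index `≤ i` to a point of index `≥ i + 1`, other than the edge between the
successive points `i` and `i + 1`, is strictly longer than that successive edge. -/
theorem successive_edge_shortest_of_angular_deviation_lt_pi_div_four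
    {V : Type*} [NormedAddCommGroup V] [InnerProductSpace ℝ V]
    (r : V) (hr : r ≠ 0) {n : ℕ} (p : Fin n → V)
    (hdev : ∀ i j : Fin n, i < j → InnerProductGeometry.angle (p j - p i) r < Real.pi / 4)
    (i j k : Fin n) (hi : (i : ℕ) + 1 < n) (hj : j ≤ i) (hk : (i : ℕ) + 1 ≤ (k : ℕ))
    (hne : ¬(j = i ∧ (k : ℕ) = (i : ℕ) + 1)) :
    dist (p i) (p ⟨(i : ℕ) + 1, hi⟩) < dist (p j) (p k) := by
  set m : Fin n := ⟨(i : ℕ) + 1, hi⟩ with hm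
  have him : i < m := by rw [Fin.lt_def]; simp [hm]
  have hmk : m ≤ k := by rw [Fin.le_def]; simpa [hm] using hk
  rw [dist_comm (p i), dist_comm (p j), dist_eq_norm, dist_eq_norm]
  have hA : j < i → ‖p m - p i‖ < ‖p m - p j‖ := by
    intro h
    have := norm_lt_norm_add_of_cone (hdev i m him) (hdev j i h)
    simpa using this
  have hB : m < k → ‖p m - p j‖ < ‖p k - p j‖ := by
    intro h
    have := norm_lt_norm_add_of_cone (hdev j m (lt_of_le_of_lt hj him)) (hdev m k h)
    rwa [add_comm, sub_add_sub_cancel] at this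
  rcases hj.lt_or_eq with h | h <;> rcases hmk.lt_or_eq with h' | h'
  · exact (hA h).trans (hB h')
  · rw [← h']; exact hA h
  · have := hB h'
    rwa [h] at this ⊢
  · exact absurd ⟨h, by rw [← h']⟩ hne
end

section
/- Let V be a real inner product space, v a point of V, r a nonzero vector, and θ, μ real numbers with μ ≥ θ + π/2. Let A and T be finite sets of points of V, each containing v, such that every point p ∈ A with p ≠ v satisfies: the angle between r and p − v is at least μ, and every point q ∈ T with q ≠ v satisfies: the angle between r and q − v is at most θ. Then for every p ∈ A \ {v} and every q ∈ T \ {v}, the angle ∠ p v q is at least π/2, and consequently dist(p, q) > dist(p, v) and dist(p, q) > dist(q, v). (Geometric core of the theorem on a long wedge with a tail: every edge between A − {v} and T − {v} is a strictly longest edge of a triangle with third vertex v.) -/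
open EuclideanGeometry

/-- Geometric core of the long-wedge-with-a-tail theorem: if every point of `A - {v}` makes
an angle at least `μ` with a ray direction `r` at `v`, every point of `T - {v}` makes an
angle at most `θ` with `r` at `v`, and `μ ≥ θ + π/2`, then every edge between `A - {v}` and
`T - {v}` subtends a non-acute angle at `v` and is a strictly longest edge of the triangle
with third vertex `v`. -/
theorem long_wedge_with_tail_edges_long
    {V : Type*} [NormedAddCommGroup V] [InnerProductSpace ℝ V]
    (v : V) (r : V) (hr : r ≠ 0) (θ μ : ℝ) (hμ : θ + Real.pi / 2 ≤ μ)
    (A T : Finset V) (hvA : v ∈ A) (hvT : v ∈ T)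
    (hA : ∀ p ∈ A, p ≠ v → μ ≤ InnerProductGeometry.angle r (p - v))
    (hT : ∀ q ∈ T, q ≠ v → InnerProductGeometry.angle r (q - v) ≤ θ) :
    ∀ p ∈ A, p ≠ v → ∀ q ∈ T, q ≠ v →
      Real.pi / 2 ≤ ∠ p v q ∧ dist p v < dist p q ∧ dist q v < dist p q := by
  intro p hp hpv q hq hqv
  have h1 := hA p hp hpv
  have h2 := hT q hq hqv
  have h3 := InnerProductGeometry.angle_le_angle_add_angle r (q - v) (p - v)
  have h4 : Real.pi / 2 ≤ InnerProductGeometry.angle (p - v) (q - v) := by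
    rw [InnerProductGeometry.angle_comm (p - v) (q - v)]
    linarith
  have h5 : inner ℝ (p - v) (q - v) ≤ 0 := by
    rw [← InnerProductGeometry.cos_angle_mul_norm_mul_norm]
    have hc : Real.cos (InnerProductGeometry.angle (p - v) (q - v)) ≤ 0 :=
      Real.cos_nonpos_of_pi_div_two_le_of_le h4
        (by linarith [InnerProductGeometry.angle_le_pi (p - v) (q - v), Real.pi_pos])
    exact mul_nonpos_of_nonpos_of_nonneg hc (by positivity)
  have h6 : 0 < ‖p - v‖ := norm_pos_iff.mpr (sub_ne_zero.mpr hpv)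
  have h7 : 0 < ‖q - v‖ := norm_pos_iff.mpr (sub_ne_zero.mpr hqv)
  have h8 := norm_sub_sq_real (p - v) (q - v)
  rw [sub_sub_sub_cancel_right] at h8
  refine ⟨h4, ?_, ?_⟩
  · rw [dist_eq_norm, dist_eq_norm]
    exact lt_of_pow_lt_pow_left₀ 2 (norm_nonneg _) (by nlinarith)
  · rw [dist_eq_norm, dist_eq_norm]
    exact lt_of_pow_lt_pow_left₀ 2 (norm_nonneg _) (by nlinarith)
end
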